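/- Up to conjugation and sign in O(E₆) ≅ ℤ/2ℤ × W(E₆), there is exactly one isometry of the lattice E₆ of order three without nonzero fixed vectors; its eigenvalues are ζ₃ and ζ₃⁻¹, each with three-dimensional eigenspace. -/

import Mathlib

open Matrix Polynomial

/-- Gram matrix of the root lattice `E₆` in the Bourbaki basis. -/
def GE6 : Matrix (Fin 6) (Fin 6) ℤ :=
  !![2,0,-1,0,0,0; 0,2,0,-1,0,0; -1,0,2,-1,0,0; 0,-1,-1,2,-1,0; 0,0,0,-1,2,-1; 0,0,0,0,-1,2]

/-- `R` is an isometry of `E₆` of order three without nonzero fixed vectors. -/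
def IsTriE6 (R : Matrix (Fin 6) (Fin 6) ℤ) : Prop :=
  IsUnit R.det ∧ Rᵀ * GE6 * R = GE6 ∧ R ^ 3 = 1 ∧ R ≠ 1 ∧
    ∀ v : Fin 6 → ℤ, R.mulVec v = v → v = 0

namespace TriE6

/-- Coordinate tuples. -/
abbrev T := ℤ × ℤ × ℤ × ℤ × ℤ × ℤ

/-- The bilinear form of `E₆` on coordinate tuples. -/
def bt : T → T → ℤ
  | (a, b, c, d, e, f), (x, y, z, u, v, w) =>
    a * (2 * x - z) + b * (2 * y - u) + c * (2 * z - x - u) + d * (2 * u - y - z - v)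
      + e * (2 * v - u - w) + f * (2 * w - v)

/-- The 72 roots. -/
def roots : List T :=
  [(-1,-2,-2,-3,-2,-1), (-1,-1,-2,-3,-2,-1), (-1,-1,-2,-2,-2,-1), (-1,-1,-2,-2,-1,-1),
   (-1,-1,-2,-2,-1,0), (-1,-1,-1,-2,-2,-1), (-1,-1,-1,-2,-1,-1), (-1,-1,-1,-2,-1,0),
   (-1,-1,-1,-1,-1,-1), (-1,-1,-1,-1,-1,0), (-1,-1,-1,-1,0,0), (-1,0,-1,-1,-1,-1),
   (-1,0,-1,-1,-1,0), (-1,0,-1,-1,0,0), (-1,0,-1,0,0,0), (-1,0,0,0,0,0), (0,-1,-1,-2,-2,-1),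
   (0,-1,-1,-2,-1,-1), (0,-1,-1,-2,-1,0), (0,-1,-1,-1,-1,-1), (0,-1,-1,-1,-1,0),
   (0,-1,-1,-1,0,0), (0,-1,0,-1,-1,-1), (0,-1,0,-1,-1,0), (0,-1,0,-1,0,0), (0,-1,0,0,0,0),
   (0,0,-1,-1,-1,-1), (0,0,-1,-1,-1,0), (0,0,-1,-1,0,0), (0,0,-1,0,0,0), (0,0,0,-1,-1,-1),
   (0,0,0,-1,-1,0), (0,0,0,-1,0,0), (0,0,0,0,-1,-1), (0,0,0,0,-1,0), (0,0,0,0,0,-1),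
   (0,0,0,0,0,1), (0,0,0,0,1,0), (0,0,0,0,1,1), (0,0,0,1,0,0), (0,0,0,1,1,0), (0,0,0,1,1,1),
   (0,0,1,0,0,0), (0,0,1,1,0,0), (0,0,1,1,1,0), (0,0,1,1,1,1), (0,1,0,0,0,0), (0,1,0,1,0,0),
   (0,1,0,1,1,0), (0,1,0,1,1,1), (0,1,1,1,0,0), (0,1,1,1,1,0), (0,1,1,1,1,1), (0,1,1,2,1,0),
   (0,1,1,2,1,1), (0,1,1,2,2,1), (1,0,0,0,0,0), (1,0,1,0,0,0), (1,0,1,1,0,0), (1,0,1,1,1,0),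
   (1,0,1,1,1,1), (1,1,1,1,0,0), (1,1,1,1,1,0), (1,1,1,1,1,1), (1,1,1,2,1,0), (1,1,1,2,1,1),
   (1,1,1,2,2,1), (1,1,2,2,1,0), (1,1,2,2,1,1), (1,1,2,2,2,1), (1,1,2,3,2,1), (1,2,2,3,2,1)]

/-- Tuple to vector. -/
def vec : T → Fin 6 → ℤ
  | (a, b, c, d, e, f) => ![a, b, c, d, e, f]

/-- Vector to tuple. -/
def tup (v : Fin 6 → ℤ) : T := (v 0, v 1, v 2, v 3, v 4, v 5)

lemma vec_tup (v : Fin 6 → ℤ) : vec (tup v) = v := by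
  ext i; fin_cases i <;> rfl

/-- The bilinear form. -/
def B (v w : Fin 6 → ℤ) : ℤ := v ⬝ᵥ (GE6 *ᵥ w)

lemma B_eq (v w : Fin 6 → ℤ) : B v w = bt (tup v) (tup w) := by
  simp [B, bt, tup, GE6, dotProduct, mulVec, Fin.sum_univ_succ]
  ring

lemma tup_vec (t : T) : tup (vec t) = t := by
  obtain ⟨a, b, c, d, e, f⟩ := t; rfl

lemma box_check : ∀ x1 ∈ [(-1 : ℤ), 0, 1], ∀ x2 ∈ [(-2 : ℤ), -1, 0, 1, 2],
    ∀ x3 ∈ [(-2 : ℤ), -1, 0, 1, 2], ∀ x4 ∈ [(-3 : ℤ), -2, -1, 0, 1, 2, 3],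
    ∀ x5 ∈ [(-2 : ℤ), -1, 0, 1, 2], ∀ x6 ∈ [(-1 : ℤ), 0, 1],
    bt (x1, x2, x3, x4, x5, x6) (x1, x2, x3, x4, x5, x6) = 2 →
      (x1, x2, x3, x4, x5, x6) ∈ roots := by
  decide +kernel

lemma mem_roots (t : T) (h : bt t t = 2) : t ∈ roots := by
  obtain ⟨x1, x2, x3, x4, x5, x6⟩ := t
  have h' := h
  simp only [bt] at h'
  have h1 : x1 ^ 2 < 2 ^ 2 := by
    nlinarith [sq_nonneg (2*x2 - x4), sq_nonneg (-x1 + 2*x3 - x4),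
      sq_nonneg (-x1 + 2*x4 - 2*x5), sq_nonneg (-x1 + 2*x5 - 2*x6), sq_nonneg (-x1 + 2*x6)]
  have h2 : x2 ^ 2 < 3 ^ 2 := by
    nlinarith [sq_nonneg (2*x1 - x3), sq_nonneg (3*x3 - 2*x4),
      sq_nonneg (-3*x2 + 4*x4 - 3*x5), sq_nonneg (-3*x2 + 5*x5 - 4*x6), sq_nonneg (-x2 + 2*x6)]
  have h3 : x3 ^ 2 < 3 ^ 2 := by
    nlinarith [sq_nonneg (2*x1 - x3), sq_nonneg (2*x2 - x4),
      sq_nonneg (-2*x3 + 3*x4 - 2*x5), sq_nonneg (-2*x3 + 4*x5 - 3*x6), sq_nonneg (-2*x3 + 5*x6)]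
  have h4 : x4 ^ 2 < 4 ^ 2 := by
    nlinarith [sq_nonneg (2*x1 - x3), sq_nonneg (2*x2 - x4), sq_nonneg (3*x3 - 2*x4),
      sq_nonneg (-x4 + 2*x5 - x6), sq_nonneg (-x4 + 3*x6)]
  have h5 : x5 ^ 2 < 3 ^ 2 := by
    nlinarith [sq_nonneg (2*x1 - x3), sq_nonneg (2*x2 - x4), sq_nonneg (3*x3 - 2*x4),
      sq_nonneg (5*x4 - 6*x5), sq_nonneg (-x5 + 2*x6)]
  have h6 : x6 ^ 2 < 2 ^ 2 := by
    nlinarith [sq_nonneg (2*x1 - x3), sq_nonneg (2*x2 - x4), sq_nonneg (3*x3 - 2*x4),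
      sq_nonneg (5*x4 - 6*x5), sq_nonneg (4*x5 - 5*x6)]
  have a1 := abs_lt.1 (abs_lt_of_sq_lt_sq h1 (by norm_num))
  have a2 := abs_lt.1 (abs_lt_of_sq_lt_sq h2 (by norm_num))
  have a3 := abs_lt.1 (abs_lt_of_sq_lt_sq h3 (by norm_num))
  have a4 := abs_lt.1 (abs_lt_of_sq_lt_sq h4 (by norm_num))
  have a5 := abs_lt.1 (abs_lt_of_sq_lt_sq h5 (by norm_num))
  have a6 := abs_lt.1 (abs_lt_of_sq_lt_sq h6 (by norm_num))
  refine box_check x1 ?_ x2 ?_ x3 ?_ x4 ?_ x5 ?_ x6 ?_ h <;>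
    simp only [List.mem_cons, List.not_mem_nil, or_false] <;> omega

/-- The first simple root. -/
def e1 : T := (1, 0, 0, 0, 0, 0)

lemma main_check : ∀ u ∈ roots, bt e1 u = -1 → ∃ c ∈ roots, bt c c = 2 ∧ bt e1 c = 0 ∧ bt u c = 0 ∧
    ∀ w ∈ roots, bt c w = -1 → bt e1 w = 0 → bt u w = 0 →
      ∃ b ∈ roots, bt b b = 2 ∧ bt e1 b = -1 ∧ bt u b = 1 ∧
        ((bt c b = -1 ∧ bt w b = 1) ∨ (bt c b = 1 ∧ bt w b = -1)) := by
  decide +kernel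

lemma B_comm (v w : Fin 6 → ℤ) : B v w = B w v := by
  rw [B_eq, B_eq]; simp only [bt, tup]; ring

lemma B_add (v w x : Fin 6 → ℤ) : B v (w + x) = B v w + B v x := by
  simp [B, mulVec_add, dotProduct_add]

lemma B_neg (v w : Fin 6 → ℤ) : B v (-w) = - B v w := by
  simp [B, mulVec_neg]

lemma quad {R : Matrix (Fin 6) (Fin 6) ℤ} (h : IsTriE6 R) : R * R + R + 1 = 0 := by
  obtain ⟨-, -, h3, -, hf⟩ := h
  ext i j
  have := hf ((R * R + R + 1).col j) (by
    have e : R * (R * R + R + 1) = R * R + R + 1 := by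
      have : R * (R * R + R + 1) = R ^ 3 + R * R + R := by noncomm_ring
      rw [this, h3]; abel
    ext i
    exact congrFun (congrFun e i) j)
  exact congrFun this i

/-- Block companion matrix. -/
def C : Matrix (Fin 6) (Fin 6) ℤ :=
  !![0,-1,0,0,0,0; 1,-1,0,0,0,0; 0,0,0,-1,0,0; 0,0,1,-1,0,0; 0,0,0,0,0,-1; 0,0,0,0,1,-1]

/-- The normal form Gram matrix. -/
def M : Matrix (Fin 6) (Fin 6) ℤ :=
  !![2,-1,-1,0,0,0; -1,2,1,-1,0,0; -1,1,2,-1,-1,1; 0,-1,-1,2,0,-1; 0,0,-1,0,2,-1; 0,0,1,-1,-1,2]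

/-- Model basis. -/
def P0 : Matrix (Fin 6) (Fin 6) ℤ :=
  !![1,-1,0,0,-1,1; 0,-1,0,0,-1,1; 0,-1,1,0,-2,2; 0,-2,0,1,-2,2; 0,-2,0,1,-1,1; 0,-1,0,1,-1,0]

/-- Inverse of the model basis. -/
def P0i : Matrix (Fin 6) (Fin 6) ℤ :=
  !![1,-1,0,0,0,0; 0,-1,0,1,-1,0; 0,-1,1,-1,1,0; 0,-2,0,1,0,0; 0,-1,0,0,1,-1; 0,-1,0,1,0,-1]

/-- Model isometry. -/
def R0 : Matrix (Fin 6) (Fin 6) ℤ :=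
  !![-1,0,0,0,1,-1; -1,-1,0,1,0,-1; -1,0,0,0,1,-2; -2,-1,1,0,1,-2; -2,0,1,0,0,-1; -1,0,1,0,0,-1]

/-- Three times the inverse of the Gram matrix. -/
def G3 : Matrix (Fin 6) (Fin 6) ℤ :=
  !![4,3,5,6,4,2; 3,6,6,9,6,3; 5,6,10,12,8,4; 6,9,12,18,12,6; 4,6,8,12,10,5; 2,3,4,6,5,4]

lemma det_G_ne : GE6.det ≠ 0 := by
  have h : GE6 * G3 = (3 : ℤ) • 1 := by decide +kernel
  intro h0
  have := congrArg det h
  rw [det_mul, h0, det_smul] at this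
  simp at this

lemma P0_gram : P0ᵀ * GE6 * P0 = M := by decide +kernel

lemma det_P0 : P0.det * P0.det = 1 := by
  have h : P0 * P0i = 1 := by decide +kernel
  have := congrArg det h
  rw [det_mul, det_one] at this
  rcases Int.isUnit_iff.1 (IsUnit.of_mul_eq_one _ this) with h | h <;> rw [h] <;> norm_num

lemma unit_of_gram {P : Matrix (Fin 6) (Fin 6) ℤ} (h : Pᵀ * GE6 * P = M) : IsUnit P.det := by
  rw [← P0_gram] at h
  have := congrArg det h
  simp only [det_mul, det_transpose] at this
  have h2 : GE6.det * (P.det * P.det) = GE6.det * (P0.det * P0.det) := by linarith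
  rw [det_P0] at h2
  exact IsUnit.of_mul_eq_one _ (mul_left_cancel₀ det_G_ne h2)

section
variable {R : Matrix (Fin 6) (Fin 6) ℤ}

lemma B_R (h : IsTriE6 R) (v w : Fin 6 → ℤ) : B (R *ᵥ v) (R *ᵥ w) = B v w := by
  have := h.2.1
  unfold B
  rw [← vecMul_transpose, ← dotProduct_mulVec, mulVec_mulVec, mulVec_mulVec, this]

lemma RR (h : IsTriE6 R) (v : Fin 6 → ℤ) : R *ᵥ (R *ᵥ v) = -v + -(R *ᵥ v) := by
  have := congrArg (fun A => A *ᵥ v) (quad h)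
  simp only [add_mulVec, one_mulVec, zero_mulVec, ← mulVec_mulVec] at this
  rw [← neg_add_rev, eq_neg_iff_add_eq_zero, ← this]; abel

/-- `(v, R w)` in terms of `(R v, w)`. -/
lemma B_right (h : IsTriE6 R) (v w : Fin 6 → ℤ) : B v (R *ᵥ w) = - B v w - B (R *ᵥ v) w := by
  rw [← B_R h v (R *ᵥ w), RR h, B_add, B_neg, B_neg, B_R h]; ring

lemma B_self (h : IsTriE6 R) {v : Fin 6 → ℤ} (hv : B v v = 2) : B v (R *ᵥ v) = -1 := by
  have := B_right h v v
  rw [B_comm (R *ᵥ v) v] at this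
  omega

lemma frame (h : IsTriE6 R) {a b c : Fin 6 → ℤ} (ha : B a a = 2) (hb : B b b = 2) (hc : B c c = 2)
    (hab : B a b = -1) (hRab : B (R *ᵥ a) b = 1) (hcb : B c b = -1) (hRcb : B (R *ᵥ c) b = 1)
    (hac : B a c = 0) (hRac : B (R *ᵥ a) c = 0) :
    ∃ P : Matrix (Fin 6) (Fin 6) ℤ, Pᵀ * GE6 * P = M ∧ R * P = P * C := by
  have ha1 := B_self h ha
  have hb1 := B_self h hb
  have hc1 := B_self h hc
  have hab1 := B_right h a b
  have hcb1 := B_right h c b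
  have hac1 := B_right h a c
  rw [hab, hRab] at hab1
  rw [hcb, hRcb] at hcb1
  rw [hac, hRac] at hac1
  norm_num at hab1 hcb1 hac1
  let cols : Fin 6 → Fin 6 → ℤ := ![a, R *ᵥ a, b, R *ᵥ b, c, R *ᵥ c]
  refine ⟨(Matrix.of cols)ᵀ, ?_, ?_⟩
  · ext i j
    have key : (((Matrix.of cols)ᵀ)ᵀ * GE6 * (Matrix.of cols)ᵀ) i j = B (cols i) (cols j) := by
      rw [Matrix.mul_assoc]
      rfl
    rw [key]
    have c1 := B_comm (R *ᵥ a) a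
    have c2 := B_comm (R *ᵥ b) b
    have c3 := B_comm (R *ᵥ c) c
    have c4 := B_comm b a
    have c5 := B_comm b (R *ᵥ a)
    have c6 := B_comm (R *ᵥ b) a
    have c7 := B_comm b c
    have c8 := B_comm b (R *ᵥ c)
    have c9 := B_comm (R *ᵥ b) c
    have c10 := B_comm c a
    have c11 := B_comm c (R *ᵥ a)
    have c12 := B_comm (R *ᵥ c) a
    fin_cases i <;> fin_cases j <;> simp [cols, M, B_R h, *]
  · ext i j
    have key : (R * (Matrix.of cols)ᵀ) i j = (R *ᵥ cols j) i := rfl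
    rw [key]
    fin_cases j <;> simp [cols, C, mul_apply, Fin.sum_univ_succ, RR h]

lemma exists_frame (h : IsTriE6 R) :
    ∃ P : Matrix (Fin 6) (Fin 6) ℤ, Pᵀ * GE6 * P = M ∧ R * P = P * C := by
  have ha : B (vec e1) (vec e1) = 2 := by decide +kernel
  have hu := B_R h (vec e1) (vec e1)
  rw [ha, B_eq] at hu
  have hau := B_self h ha
  rw [B_eq, tup_vec] at hau
  obtain ⟨c, -, hcc, hac, huc, H⟩ := main_check _ (mem_roots _ hu) hau
  have hac' : B (vec e1) (vec c) = 0 := by rw [B_eq, tup_vec, tup_vec, hac]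
  have huc' : B (R *ᵥ vec e1) (vec c) = 0 := by rw [B_eq, tup_vec, huc]
  have hcc' : B (vec c) (vec c) = 2 := by rw [B_eq, tup_vec, hcc]
  have hw := B_R h (vec c) (vec c)
  rw [hcc', B_eq] at hw
  have h1 := B_self h hcc'
  have h2 := B_right h (vec e1) (vec c)
  rw [hac', huc'] at h2
  have h3 := B_R h (vec e1) (vec c)
  rw [hac', B_eq] at h3
  rw [B_eq, tup_vec] at h1 h2
  obtain ⟨b, -, hbb, hab, hub, H'⟩ := H _ (mem_roots _ hw) h1 (by simpa using h2) h3
  have hbb' : B (vec b) (vec b) = 2 := by rw [B_eq, tup_vec, hbb]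
  have hab' : B (vec e1) (vec b) = -1 := by rw [B_eq, tup_vec, tup_vec, hab]
  have hub' : B (R *ᵥ vec e1) (vec b) = 1 := by rw [B_eq, tup_vec, hub]
  rcases H' with ⟨p, q⟩ | ⟨p, q⟩
  · refine frame h ha hbb' hcc' hab' hub' ?_ ?_ hac' huc'
    · rw [B_eq, tup_vec, tup_vec, p]
    · rw [B_eq, tup_vec, q]
  · have p' : B (vec b) (vec c) = 1 := by rw [B_comm, B_eq, tup_vec, tup_vec, p]
    have q' : B (vec b) (R *ᵥ vec c) = -1 := by rw [B_comm, B_eq, tup_vec, q]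
    refine frame h (c := - vec c) ha hbb' ?_ hab' hub' ?_ ?_ ?_ ?_
    · rw [B_neg, B_comm, B_neg, hcc']; norm_num
    · rw [B_comm, B_neg, p']
    · rw [mulVec_neg, B_comm, B_neg, q']; norm_num
    · rw [B_neg, hac']; norm_num
    · rw [B_neg, huc']; norm_num

end

/-- Companion matrix of `X ^ 2 + X + 1`. -/
def D : Matrix (Fin 2) (Fin 2) ℤ := !![0, -1; 1, -1]

lemma charpoly_D : D.charpoly = X ^ 2 + X + 1 := by
  rw [charpoly_fin_two]
  simp [D, trace_fin_two, det_fin_two]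

lemma charpoly_C : C.charpoly = (X ^ 2 + X + 1) ^ 3 := by
  have h : C = reindex finSumFinEquiv finSumFinEquiv
      (fromBlocks D 0 0 (reindex finSumFinEquiv finSumFinEquiv (fromBlocks D 0 0 D))) := by
    decide +kernel
  rw [h, charpoly_reindex, charpoly_fromBlocks_zero₁₂, charpoly_reindex,
    charpoly_fromBlocks_zero₁₂, charpoly_D]
  ring

lemma R0_tri : IsTriE6 R0 := by
  have h3 : R0 ^ 3 = 1 := by decide +kernel
  have hq : R0 * R0 + R0 + 1 = 0 := by decide +kernel
  refine ⟨?_, by decide +kernel, h3, by decide +kernel, ?_⟩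
  · have := congrArg det h3
    rw [det_pow, det_one] at this
    exact IsUnit.of_pow_eq_one this (by norm_num)
  · intro v hv
    have := congrArg (fun A => A *ᵥ v) hq
    simp only [add_mulVec, one_mulVec, zero_mulVec, ← mulVec_mulVec, hv] at this
    ext i
    have := congrFun this i
    simp only [Pi.add_apply, Pi.zero_apply] at this ⊢
    omega

end TriE6

/-- there exists an order three isometry of `E₆` without nonzero fixed
vectors; any two such are conjugate up to sign by an isometry of `E₆` (uniqueness up to
conjugation and sign in `O(E₆) ≅ ℤ/2ℤ × W(E₆)`); and each such isometry has
characteristic polynomial `(X²+X+1)³`, i.e. its eigenvalues are `ζ₃` and `ζ₃⁻¹`, each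
with three-dimensional eigenspace. -/
theorem stmt_15 :
    (∃ R, IsTriE6 R) ∧
    (∀ R S, IsTriE6 R → IsTriE6 S →
      ∃ P : Matrix (Fin 6) (Fin 6) ℤ, IsUnit P.det ∧ Pᵀ * GE6 * P = GE6 ∧
        (S * P = P * R ∨ S * P = -(P * R))) ∧
    (∀ R, IsTriE6 R → R.charpoly = (X ^ 2 + X + 1) ^ 3) := by
  refine ⟨⟨_, TriE6.R0_tri⟩, ?_, ?_⟩
  · intro R S hR hS
    obtain ⟨P, hP, hRP⟩ := TriE6.exists_frame hR
    obtain ⟨Q, hQ, hSQ⟩ := TriE6.exists_frame hS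
    have uP := TriE6.unit_of_gram hP
    have uQ := TriE6.unit_of_gram hQ
    have e1 : P * P⁻¹ = 1 := mul_nonsing_inv _ uP
    have e2 : P⁻¹ * P = 1 := nonsing_inv_mul _ uP
    refine ⟨Q * P⁻¹, ?_, ?_, Or.inl ?_⟩
    · rw [det_mul]
      exact uQ.mul (isUnit_nonsing_inv_det _ uP)
    · calc (Q * P⁻¹)ᵀ * GE6 * (Q * P⁻¹) = (P⁻¹)ᵀ * (Qᵀ * GE6 * Q) * P⁻¹ := by
            rw [transpose_mul]; noncomm_ring
        _ = (P * P⁻¹)ᵀ * GE6 * (P * P⁻¹) := by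
            rw [hQ, ← hP, transpose_mul]; noncomm_ring
        _ = GE6 := by rw [e1]; simp
    · calc S * (Q * P⁻¹) = (S * Q) * P⁻¹ := by noncomm_ring
        _ = Q * (P⁻¹ * P) * TriE6.C * P⁻¹ := by rw [hSQ, e2, Matrix.mul_one]
        _ = Q * P⁻¹ * (P * TriE6.C) * P⁻¹ := by noncomm_ring
        _ = Q * P⁻¹ * R * (P * P⁻¹) := by rw [← hRP]; noncomm_ring
        _ = Q * P⁻¹ * R := by rw [e1, Matrix.mul_one]
  · intro R hR
    obtain ⟨P, hP, hRP⟩ := TriE6.exists_frame hR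
    have uP := TriE6.unit_of_gram hP
    have e1 : P * P⁻¹ = 1 := mul_nonsing_inv _ uP
    have hR' : R = P * (TriE6.C * P⁻¹) := by
      rw [← Matrix.mul_assoc, ← hRP, Matrix.mul_assoc, e1, Matrix.mul_one]
    rw [hR', Matrix.charpoly_mul_comm, Matrix.mul_assoc, nonsing_inv_mul _ uP, Matrix.mul_one,
      TriE6.charpoly_C]
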